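/- Let ℓ be a positive integer. In the permutation group of pairs (u,v) of vectors u, v : ZMod ℓ → ℂ, let G₁ be the subgroup generated by the pair shifts C_{i,j}(u,v) = (c_i(u), c_j(v)) for i,j ∈ ZMod ℓ, G₂ the subgroup generated by the pair decimations D_{k,r}(u,v) = (d_k(u), d_{(−1)^r·k}(v)) for k ∈ (ZMod ℓ)ˣ, r ∈ {0,1}, G₃ the subgroup generated by the swap S(u,v) = (v,u), and GG = ⟨G₁, G₂, G₃⟩. Then every element g ∈ GG admits a unique factorization g = g₁·g₂·g₃ with g₁ ∈ G₁, g₂ ∈ G₂, and g₃ ∈ G₃; consequently GG is isomorphic to the iterated semidirect product G₁ ⋊ (G₂ ⋊ G₃) with conjugation actions. -/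

import Mathlib

/-!
The swap exchanges the two shift amounts and sends `D_{k,r}` to `D_{(-1)^r k, r}`, while `D_{k,r}`
conjugates `C_{i,j}` to `C_{k i, (-1)^r k j}`. So `G₃` normalizes `G₂`, and `G₂`, `G₃` both
normalize `G₁`. Under these conditions `(g₁, g₂, g₃) ↦ g₁ g₂ g₃` is a homomorphism from the iterated
semidirect product whose image is the join of the three subgroups; it is injective as soon as
`g₁ g₂ g₃ = 1` forces `g₁ = g₂ = g₃ = 1` (`exists_iterated_semidirect`).

For the last condition (`factors_trivial`), evaluating at the pair `(0, 1)` of constant vectors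
excludes the swap, because shifts and decimations fix constant vectors componentwise. Evaluating
`C_{i,j} D_{k,r} = 1` at the indicator of `0` in both components, at index `0`, gives
`-i k⁻¹ = 0` and likewise for `j`, so `i = j = 0`.
-/

/-- Cyclic shift by `j`: `(c_j v) i = v (i - j)`. -/
def cyc (ℓ : ℕ) (j : ZMod ℓ) : Equiv.Perm (ZMod ℓ → ℂ) where
  toFun v i := v (i - j)
  invFun v i := v (i + j)
  left_inv v := by funext i; simp
  right_inv v := by funext i; simp

/-- Decimation by the unit `k`: `(d_k v) i = v (i * k⁻¹)`. -/
def dec (ℓ : ℕ) (k : (ZMod ℓ)ˣ) : Equiv.Perm (ZMod ℓ → ℂ) where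
  toFun v i := v (i * ((k⁻¹ : (ZMod ℓ)ˣ) : ZMod ℓ))
  invFun v i := v (i * ((k : (ZMod ℓ)ˣ) : ZMod ℓ))
  left_inv v := by funext i; simp [mul_assoc, ← Units.val_mul]
  right_inv v := by funext i; simp [mul_assoc, ← Units.val_mul]

/-- The swap (switch) permutation `S (u, v) = (v, u)` on pairs of vectors. -/
def swapP (ℓ : ℕ) : Equiv.Perm ((ZMod ℓ → ℂ) × (ZMod ℓ → ℂ)) :=
  Equiv.prodComm _ _

/-- The pair cyclic shift `C_{i,j} (u, v) = (c_i u, c_j v)`. -/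
def shiftP (ℓ : ℕ) (i j : ZMod ℓ) : Equiv.Perm ((ZMod ℓ → ℂ) × (ZMod ℓ → ℂ)) :=
  (cyc ℓ i).prodCongr (cyc ℓ j)

/-- The pair decimation `D_{k,r} (u, v) = (d_k u, d_{(-1)^r k} v)`. -/
def decP (ℓ : ℕ) (k : (ZMod ℓ)ˣ) (r : ℕ) : Equiv.Perm ((ZMod ℓ → ℂ) × (ZMod ℓ → ℂ)) :=
  (dec ℓ k).prodCongr (dec ℓ ((-1) ^ r * k))

/-- For subgroups `H`, `K`, `L` with `K`, `L` normalizing `H` and `L` normalizing `K`, triviality of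
the factorizations of `1` is enough to identify `H ⊔ K ⊔ L` with `H ⋊ (K ⋊ L)`. -/
theorem exists_iterated_semidirect {P : Type*} [Group P] (H K L : Subgroup P)
    (hKH : K ≤ Subgroup.normalizer (H : Set P)) (hLH : L ≤ Subgroup.normalizer (H : Set P))
    (hLK : L ≤ Subgroup.normalizer (K : Set P))
    (htriv : ∀ h ∈ H, ∀ k ∈ K, ∀ l ∈ L, h * k * l = 1 → h = 1 ∧ k = 1 ∧ l = 1) :
    (∀ g ∈ H ⊔ K ⊔ L, ∃! t : H × K × L, g = (t.1 : P) * (t.2.1 : P) * (t.2.2 : P)) ∧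
    ∃ φ₃ : ↥L →* MulAut ↥K,
      (∀ (q : L) (x : K), ((φ₃ q x : ↥K) : P) = (q : P) * (x : P) * (q : P)⁻¹) ∧
      ∃ φ : (↥K ⋊[φ₃] ↥L) →* MulAut ↥H,
        (∀ (p : ↥K ⋊[φ₃] ↥L) (x : H),
          ((φ p x : ↥H) : P)
            = ((p.left : P) * (p.right : P)) * (x : P) * ((p.left : P) * (p.right : P))⁻¹) ∧
        ∃ e : (↥H ⋊[φ] (↥K ⋊[φ₃] ↥L)) ≃* ↥(H ⊔ K ⊔ L),
          ∀ p : ↥H ⋊[φ] (↥K ⋊[φ₃] ↥L),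
            ((e p : ↥(H ⊔ K ⊔ L)) : P)
              = (p.left : P) * (p.right.left : P) * (p.right.right : P) := by
  let φ₃ : ↥L →* MulAut ↥K := K.normalizerMonoidHom.comp (Subgroup.inclusion hLK)
  have hφ₃ : ∀ (q : L) (x : K), ((φ₃ q x : ↥K) : P) = (q : P) * (x : P) * (q : P)⁻¹ :=
    fun q x => rfl
  let f : (↥K ⋊[φ₃] ↥L) →* P := SemidirectProduct.lift K.subtype L.subtype (by
    intro q; ext x; simp [hφ₃])
  have hf : ∀ p, f p = (p.left : P) * (p.right : P) := fun p => rfl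
  have hfN : ∀ p, f p ∈ Subgroup.normalizer (H : Set P) := fun p =>
    mul_mem (hKH p.left.2) (hLH p.right.2)
  let φ : (↥K ⋊[φ₃] ↥L) →* MulAut ↥H := H.normalizerMonoidHom.comp (f.codRestrict _ hfN)
  have hφ : ∀ (p : ↥K ⋊[φ₃] ↥L) (x : H), ((φ p x : ↥H) : P)
      = ((p.left : P) * (p.right : P)) * (x : P) * ((p.left : P) * (p.right : P))⁻¹ :=
    fun p x => rfl
  let F : (↥H ⋊[φ] (↥K ⋊[φ₃] ↥L)) →* P := SemidirectProduct.lift H.subtype f (by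
    intro p; ext x; simp [hφ, hf, mul_assoc])
  have hF : ∀ p, F p = (p.left : P) * (p.right.left : P) * (p.right.right : P) := fun p =>
    (mul_assoc (p.left : P) (p.right.left : P) (p.right.right : P)).symm
  have hFmem : ∀ p, F p ∈ H ⊔ K ⊔ L := fun p => by
    rw [hF]
    exact mul_mem (mul_mem (le_sup_left (a := H ⊔ K) (le_sup_left (a := H) p.left.2))
      (le_sup_left (a := H ⊔ K) (le_sup_right (a := H) p.right.left.2)))
      (le_sup_right (a := H ⊔ K) p.right.right.2)
  have hFinj : Function.Injective F := by
    rw [injective_iff_map_eq_one]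
    intro p hp
    rw [hF] at hp
    obtain ⟨h1, h2, h3⟩ := htriv _ p.left.2 _ p.right.left.2 _ p.right.right.2 hp
    exact SemidirectProduct.ext (Subtype.ext h1)
      (SemidirectProduct.ext (Subtype.ext h2) (Subtype.ext h3))
  have hFsurj : H ⊔ K ⊔ L ≤ F.range := by
    refine sup_le (sup_le ?_ ?_) ?_
    · exact fun x hx => ⟨⟨⟨x, hx⟩, 1⟩, by simp [hF]⟩
    · exact fun x hx => ⟨⟨1, ⟨⟨x, hx⟩, 1⟩⟩, by simp [hF]⟩
    · exact fun x hx => ⟨⟨1, ⟨1, ⟨x, hx⟩⟩⟩, by simp [hF]⟩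
  refine ⟨?_, φ₃, hφ₃, φ, hφ, MulEquiv.ofBijective (F.codRestrict _ hFmem) ⟨?_, ?_⟩, hF⟩
  · intro g hg
    obtain ⟨p, rfl⟩ := hFsurj hg
    refine ⟨(p.left, p.right.left, p.right.right), hF p, ?_⟩
    rintro ⟨a, b, c⟩ ht
    have : p = ⟨a, ⟨b, c⟩⟩ := hFinj (ht.trans (hF ⟨a, ⟨b, c⟩⟩).symm)
    subst this
    rfl
  · intro p q hpq
    exact hFinj (congrArg Subtype.val hpq)
  · rintro ⟨g, hg⟩
    obtain ⟨p, rfl⟩ := hFsurj hg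
    exact ⟨p, rfl⟩

/-- Normalization can be tested on generators when the normalizing set is closed under inverses. -/
theorem closure_le_normalizer_closure {P : Type*} [Group P] {S T : Set P}
    (hinv : ∀ t ∈ T, t⁻¹ ∈ T) (hconj : ∀ t ∈ T, ∀ s ∈ S, t * s * t⁻¹ ∈ S) :
    Subgroup.closure T ≤ Subgroup.normalizer (Subgroup.closure S : Set P) := by
  have key : ∀ t ∈ T, ∀ x ∈ Subgroup.closure S, t * x * t⁻¹ ∈ Subgroup.closure S := by
    intro t ht
    have : Subgroup.closure S ≤ (Subgroup.closure S).comap (MulAut.conj t).toMonoidHom := by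
      rw [Subgroup.closure_le]
      exact fun s hs => Subgroup.subset_closure (hconj t ht s hs)
    exact fun x hx => this hx
  rw [Subgroup.closure_le]
  intro t ht
  refine Subgroup.mem_normalizer_iff.2 fun x => ⟨key t ht x, fun hx => ?_⟩
  simpa [mul_assoc] using key _ (hinv t ht) _ hx

theorem swapP_inv (ℓ : ℕ) : (swapP ℓ)⁻¹ = swapP ℓ := rfl

theorem shiftP_zero (ℓ : ℕ) : shiftP ℓ 0 0 = 1 := by
  ext p x <;> simp [shiftP, cyc]

theorem shiftP_mul (ℓ : ℕ) (i j i' j' : ZMod ℓ) :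
    shiftP ℓ i j * shiftP ℓ i' j' = shiftP ℓ (i + i') (j + j') := by
  ext p x <;> simp [shiftP, cyc, sub_sub]

theorem shiftP_inv (ℓ : ℕ) (i j : ZMod ℓ) : (shiftP ℓ i j)⁻¹ = shiftP ℓ (-i) (-j) := by
  rw [inv_eq_iff_mul_eq_one, shiftP_mul]
  simp [shiftP_zero]

theorem decP_one (ℓ : ℕ) : decP ℓ 1 0 = 1 := by
  ext p x <;> simp [decP, dec]

theorem decP_mul (ℓ : ℕ) (k k' : (ZMod ℓ)ˣ) (r r' : ℕ) :
    decP ℓ k r * decP ℓ k' r' = decP ℓ (k * k') (r + r') := by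
  have hdec : ∀ a b : (ZMod ℓ)ˣ, dec ℓ a * dec ℓ b = dec ℓ (a * b) := by
    intro a b
    ext v x
    simp [dec, mul_assoc, mul_comm]
  have h : (-1 : (ZMod ℓ)ˣ) ^ (r + r') * (k * k') = (-1) ^ r * k * ((-1) ^ r' * k') := by
    rw [pow_add, mul_mul_mul_comm]
  rw [decP, decP, decP, h, ← hdec k k', ← hdec ((-1) ^ r * k)]
  rfl

theorem decP_mod_two (ℓ : ℕ) (k : (ZMod ℓ)ˣ) (r : ℕ) : decP ℓ k (r % 2) = decP ℓ k r := by
  have h : (-1 : (ZMod ℓ)ˣ) ^ (r % 2) = (-1) ^ r :=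
    (pow_eq_pow_mod r (by simp)).symm
  rw [decP, decP, h]

theorem decP_inv (ℓ : ℕ) (k : (ZMod ℓ)ˣ) (r : ℕ) : (decP ℓ k r)⁻¹ = decP ℓ k⁻¹ r := by
  rw [inv_eq_iff_mul_eq_one, decP_mul, ← decP_mod_two, mul_inv_cancel,
    show (r + r) % 2 = 0 by omega, decP_one]

theorem swapP_conj_shiftP (ℓ : ℕ) (i j : ZMod ℓ) :
    swapP ℓ * shiftP ℓ i j * (swapP ℓ)⁻¹ = shiftP ℓ j i := rfl

theorem swapP_conj_decP (ℓ : ℕ) (k : (ZMod ℓ)ˣ) (r : ℕ) :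
    swapP ℓ * decP ℓ k r * (swapP ℓ)⁻¹ = decP ℓ ((-1) ^ r * k) r := by
  have h : (-1 : (ZMod ℓ)ˣ) ^ r * ((-1) ^ r * k) = k := by
    rw [← mul_assoc, ← mul_pow]; simp
  rw [decP, decP, h]
  rfl

theorem decP_conj_shiftP (ℓ : ℕ) (k : (ZMod ℓ)ˣ) (r : ℕ) (i j : ZMod ℓ) :
    decP ℓ k r * shiftP ℓ i j * (decP ℓ k r)⁻¹
      = shiftP ℓ (i * k) (j * ((-1) ^ r * k : (ZMod ℓ)ˣ)) := by
  have hdec : ∀ (a : (ZMod ℓ)ˣ) (b : ZMod ℓ), dec ℓ a * cyc ℓ b = cyc ℓ (b * a) * dec ℓ a := by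
    intro a b
    ext v x
    simp [dec, cyc, sub_mul]
  rw [mul_inv_eq_iff_eq_mul]
  ext p x
  · exact congrFun (congrArg (fun e => e p.1) (hdec k i)) x
  · exact congrFun (congrArg (fun e => e p.2) (hdec ((-1) ^ r * k) j)) x

theorem exists_eq_shiftP (ℓ : ℕ) {g : Equiv.Perm ((ZMod ℓ → ℂ) × (ZMod ℓ → ℂ))}
    (hg : g ∈ Subgroup.closure {p | ∃ i j : ZMod ℓ, p = shiftP ℓ i j}) :
    ∃ i j, g = shiftP ℓ i j := by
  induction hg using Subgroup.closure_induction with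
  | mem x hx => exact hx
  | one => exact ⟨0, 0, (shiftP_zero ℓ).symm⟩
  | mul x y _ _ hx hy =>
    obtain ⟨i, j, rfl⟩ := hx
    obtain ⟨i', j', rfl⟩ := hy
    exact ⟨_, _, shiftP_mul ..⟩
  | inv x _ hx =>
    obtain ⟨i, j, rfl⟩ := hx
    exact ⟨_, _, shiftP_inv ..⟩

theorem exists_eq_decP (ℓ : ℕ) {g : Equiv.Perm ((ZMod ℓ → ℂ) × (ZMod ℓ → ℂ))}
    (hg : g ∈ Subgroup.closure
      {p | ∃ k : (ZMod ℓ)ˣ, ∃ r : ℕ, (r = 0 ∨ r = 1) ∧ p = decP ℓ k r}) :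
    ∃ k r, g = decP ℓ k r := by
  induction hg using Subgroup.closure_induction with
  | mem x hx =>
    obtain ⟨k, r, _, rfl⟩ := hx
    exact ⟨k, r, rfl⟩
  | one => exact ⟨1, 0, (decP_one ℓ).symm⟩
  | mul x y _ _ hx hy =>
    obtain ⟨k, r, rfl⟩ := hx
    obtain ⟨k', r', rfl⟩ := hy
    exact ⟨_, _, decP_mul ..⟩
  | inv x _ hx =>
    obtain ⟨k, r, rfl⟩ := hx
    exact ⟨_, _, decP_inv ..⟩

theorem eq_one_or_swapP (ℓ : ℕ) {g : Equiv.Perm ((ZMod ℓ → ℂ) × (ZMod ℓ → ℂ))}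
    (hg : g ∈ Subgroup.closure {swapP ℓ}) : g = 1 ∨ g = swapP ℓ := by
  induction hg using Subgroup.closure_induction with
  | mem x hx => exact Or.inr hx
  | one => exact Or.inl rfl
  | mul x y _ _ hx hy =>
    rcases hx with rfl | rfl <;> rcases hy with rfl | rfl
    · exact Or.inl rfl
    · exact Or.inr rfl
    · exact Or.inr rfl
    · exact Or.inl rfl
  | inv x _ hx =>
    rcases hx with rfl | rfl
    · exact Or.inl rfl
    · exact Or.inr rfl

theorem shiftP_mul_decP_mul_swapP_ne_one (ℓ : ℕ) (i j : ZMod ℓ) (k : (ZMod ℓ)ˣ) (r : ℕ) :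
    shiftP ℓ i j * decP ℓ k r * swapP ℓ ≠ 1 := by
  intro h
  have h0 : (1 : ℂ) = 0 :=
    congrFun (congrArg Prod.fst (congrArg (fun e => e (fun _ => 0, fun _ => 1)) h)) 0
  exact one_ne_zero h0

theorem eq_zero_of_cyc_dec (ℓ : ℕ) (i : ZMod ℓ) (k : (ZMod ℓ)ˣ)
    (h : cyc ℓ i (dec ℓ k (Pi.single 0 1)) = Pi.single 0 1) : i = 0 := by
  have h0 := congrFun h 0
  by_contra hi
  simp [cyc, dec, Pi.single_apply, hi] at h0

theorem factors_trivial (ℓ : ℕ) :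
    ∀ g₁ ∈ Subgroup.closure {p | ∃ i j : ZMod ℓ, p = shiftP ℓ i j},
    ∀ g₂ ∈ Subgroup.closure
      {p | ∃ k : (ZMod ℓ)ˣ, ∃ r : ℕ, (r = 0 ∨ r = 1) ∧ p = decP ℓ k r},
    ∀ g₃ ∈ Subgroup.closure {swapP ℓ}, g₁ * g₂ * g₃ = 1 → g₁ = 1 ∧ g₂ = 1 ∧ g₃ = 1 := by
  intro g₁ h₁ g₂ h₂ g₃ h₃ h
  obtain ⟨i, j, rfl⟩ := exists_eq_shiftP ℓ h₁
  obtain ⟨k, r, rfl⟩ := exists_eq_decP ℓ h₂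
  rcases eq_one_or_swapP ℓ h₃ with rfl | rfl
  · rw [mul_one] at h
    have hp := congrArg (fun e => e (Pi.single 0 1, Pi.single 0 1)) h
    obtain rfl : i = 0 := eq_zero_of_cyc_dec ℓ i k (congrArg Prod.fst hp)
    obtain rfl : j = 0 := eq_zero_of_cyc_dec ℓ j ((-1) ^ r * k) (congrArg Prod.snd hp)
    rw [shiftP_zero, one_mul] at h
    exact ⟨shiftP_zero ℓ, h, rfl⟩
  · exact absurd h (shiftP_mul_decP_mul_swapP_ne_one ℓ i j k r)

/-- **Structure of `GG`.** Every element of `GG = ⟨G₁, G₂, G₃⟩` factors uniquely as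
`g₁ g₂ g₃` with `g₁ ∈ G₁`, `g₂ ∈ G₂`, `g₃ ∈ G₃`; consequently `GG` is isomorphic
to the iterated semidirect product `G₁ ⋊ (G₂ ⋊ G₃)` with conjugation actions. -/
theorem GG_iso_iterated_semidirectProduct (ℓ : ℕ) (hℓ : 0 < ℓ) :
    let P := Equiv.Perm ((ZMod ℓ → ℂ) × (ZMod ℓ → ℂ))
    let G₁ : Subgroup P := Subgroup.closure {p | ∃ i j : ZMod ℓ, p = shiftP ℓ i j}
    let G₂ : Subgroup P :=
      Subgroup.closure {p | ∃ k : (ZMod ℓ)ˣ, ∃ r : ℕ, (r = 0 ∨ r = 1) ∧ p = decP ℓ k r}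
    let G₃ : Subgroup P := Subgroup.closure {swapP ℓ}
    let GG : Subgroup P := G₁ ⊔ G₂ ⊔ G₃
    (∀ g ∈ GG, ∃! t : G₁ × G₂ × G₃, g = (t.1 : P) * (t.2.1 : P) * (t.2.2 : P)) ∧
    ∃ φ₃ : ↥G₃ →* MulAut ↥G₂,
      (∀ (q : G₃) (x : G₂), ((φ₃ q x : ↥G₂) : P) = (q : P) * (x : P) * (q : P)⁻¹) ∧
      ∃ φ : (↥G₂ ⋊[φ₃] ↥G₃) →* MulAut ↥G₁,
        (∀ (p : ↥G₂ ⋊[φ₃] ↥G₃) (x : G₁),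
          ((φ p x : ↥G₁) : P)
            = ((p.left : P) * (p.right : P)) * (x : P) * ((p.left : P) * (p.right : P))⁻¹) ∧
        ∃ e : (↥G₁ ⋊[φ] (↥G₂ ⋊[φ₃] ↥G₃)) ≃* ↥GG,
          ∀ p : ↥G₁ ⋊[φ] (↥G₂ ⋊[φ₃] ↥G₃),
            ((e p : ↥GG) : P) = (p.left : P) * (p.right.left : P) * (p.right.right : P) := by
  intro P G₁ G₂ G₃ GG
  refine exists_iterated_semidirect G₁ G₂ G₃ ?_ ?_ ?_ (factors_trivial ℓ)
  · refine closure_le_normalizer_closure ?_ ?_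
    · rintro _ ⟨k, r, hr, rfl⟩
      exact ⟨k⁻¹, r, hr, decP_inv ..⟩
    · rintro _ ⟨k, r, _, rfl⟩ _ ⟨i, j, rfl⟩
      exact ⟨_, _, decP_conj_shiftP ..⟩
  · refine closure_le_normalizer_closure ?_ ?_
    · rintro _ rfl
      exact swapP_inv ℓ
    · rintro _ rfl _ ⟨i, j, rfl⟩
      exact ⟨_, _, swapP_conj_shiftP ..⟩
  · refine closure_le_normalizer_closure ?_ ?_
    · rintro _ rfl
      exact swapP_inv ℓ
    · rintro _ rfl _ ⟨k, r, hr, rfl⟩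
      exact ⟨_, r, hr, swapP_conj_decP ..⟩
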